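/- The Egli-Milner hom makes the V-subsets of a V-category into a V-category: for a V-category A over a commutative quantale V, define for V-subsets φ, ψ of A the value P A(φ,ψ) = (⋀_a [φ a, ⋁_{a'} ψ a' ⊗ A(a,a')]) ⊗ (⋀_{a'} [ψ a', ⋁_a φ a ⊗ A(a,a')]). Then I ≤ P A(φ,φ) for every V-subset φ, and P A(φ,ψ) ⊗ P A(ψ,χ) ≤ P A(φ,χ) for all V-subsets φ, ψ, χ. -/

import Mathlib

universe u v w

/-- A category enriched in a commutative quantale `V`:
objects together with `V`-valued homs satisfying the identity and composition axioms. -/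
structure VCategory (V : Type u) [CompleteLattice V] [CommMonoid V] where
  Obj : Type v
  hom : Obj → Obj → V
  one_le_hom : ∀ a, (1 : V) ≤ hom a a
  comp_le : ∀ a b c, hom b c * hom a b ≤ hom a c

/-- A `V`-functor is an object assignment which is (hom-)expanding. -/
def IsVFunctor {V : Type u} [CompleteLattice V] [CommMonoid V]
    (A : VCategory.{u, v} V) (B : VCategory.{u, w} V) (f : A.Obj → B.Obj) : Prop :=
  ∀ a a', A.hom a a' ≤ B.hom (f a) (f a')

/-- A module `R : A ⇸ B`. -/
def IsModule {V : Type u} [CompleteLattice V] [CommMonoid V]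
    (A : VCategory.{u, v} V) (B : VCategory.{u, w} V) (R : B.Obj → A.Obj → V) : Prop :=
  ∀ (a a' : A.Obj) (b b' : B.Obj), B.hom b' b * R b a * A.hom a a' ≤ R b' a'

/-- The internal hom of the quantale: `[x,y] = ⋁ {z | x ⊗ z ≤ y}`. -/
def ihom {V : Type u} [CompleteLattice V] [CommMonoid V] (x y : V) : V :=
  sSup {z | x * z ≤ y}

/-- A presheaf on `A`. -/
def IsPresheaf {V : Type u} [CompleteLattice V] [CommMonoid V]
    (A : VCategory.{u, v} V) (F : A.Obj → V) : Prop :=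
  ∀ a a', F a * A.hom a' a ≤ F a'

/-- The Egli-Milner `V`-valued hom on `V`-subsets of a `V`-category `A`. -/
def PHom {V : Type u} [CompleteLattice V] [CommMonoid V]
    (A : VCategory.{u, v} V) (φ ψ : A.Obj → V) : V :=
  (⨅ a, ihom (φ a) (⨆ a', ψ a' * A.hom a a')) *
    (⨅ a', ihom (ψ a') (⨆ a, φ a * A.hom a a'))

theorem q_mono {V : Type u} [CompleteLattice V] [CommMonoid V]
    (hV : ∀ (x : V) (s : Set V), x * sSup s = ⨆ y ∈ s, x * y)
    {a b c d : V} (h : a ≤ b) (k : c ≤ d) : a * c ≤ b * d := by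
  have key : ∀ x y z : V, y ≤ z → x * y ≤ x * z := by
    intro x y z hyz
    have e : sSup {y, z} = z := by rw [sSup_pair]; exact sup_eq_right.2 hyz
    have := hV x {y, z}
    rw [e] at this
    rw [this]
    exact le_iSup₂_of_le y (by simp) le_rfl
  calc a * c ≤ a * d := key _ _ _ k
    _ = d * a := mul_comm _ _
    _ ≤ d * b := key _ _ _ h
    _ = b * d := mul_comm _ _

theorem q_iSup {V : Type u} [CompleteLattice V] [CommMonoid V]
    (hV : ∀ (x : V) (s : Set V), x * sSup s = ⨆ y ∈ s, x * y)
    {ι : Type v} (x : V) (f : ι → V) : x * (⨆ i, f i) = ⨆ i, x * f i := by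
  rw [iSup, hV, iSup_range]

theorem q_ihom {V : Type u} [CompleteLattice V] [CommMonoid V]
    (hV : ∀ (x : V) (s : Set V), x * sSup s = ⨆ y ∈ s, x * y)
    (x y : V) : x * ihom x y ≤ y := by
  rw [ihom, hV]
  exact iSup₂_le fun z hz => hz

theorem q_half {V : Type u} [CompleteLattice V] [CommMonoid V]
    (hV : ∀ (x : V) (s : Set V), x * sSup s = ⨆ y ∈ s, x * y)
    {O : Type v} (K : O → O → V) (hK : ∀ a b c, K a b * K b c ≤ K a c)
    (φ ψ χ : O → V) :
    (⨅ a, ihom (φ a) (⨆ a', ψ a' * K a a')) * (⨅ a, ihom (ψ a) (⨆ a', χ a' * K a a'))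
      ≤ ⨅ a, ihom (φ a) (⨆ a', χ a' * K a a') := by
  refine le_iInf fun a => le_sSup ?_
  change φ a * _ ≤ _
  set P := ⨅ a, ihom (φ a) (⨆ a', ψ a' * K a a')
  set Q := ⨅ a, ihom (ψ a) (⨆ a', χ a' * K a a') with hQ
  have h1 : φ a * P ≤ ⨆ a', ψ a' * K a a' :=
    (q_mono hV le_rfl (iInf_le _ a)).trans (q_ihom hV _ _)
  have h2 : ∀ b, ψ b * Q ≤ ⨆ a', χ a' * K b a' := fun b =>
    (q_mono hV le_rfl (iInf_le _ b)).trans (q_ihom hV _ _)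
  rw [← mul_assoc]
  refine (q_mono hV h1 le_rfl).trans ?_
  rw [mul_comm, q_iSup hV]
  refine iSup_le fun b => ?_
  have e : Q * (ψ b * K a b) = K a b * (ψ b * Q) := by
    rw [mul_comm (ψ b) (K a b), mul_left_comm, mul_comm Q]
  rw [e]
  refine (q_mono hV le_rfl (h2 b)).trans ?_
  rw [q_iSup hV]
  refine iSup_le fun c => le_iSup_of_le c ?_
  rw [mul_left_comm]
  exact q_mono hV le_rfl (hK a b c)

/-- The Egli-Milner hom makes the `V`-subsets of a `V`-category into a `V`-category. -/
theorem egliMilner_vcategory {V : Type u} [CompleteLattice V] [CommMonoid V]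
    (hV : ∀ (x : V) (s : Set V), x * sSup s = ⨆ y ∈ s, x * y)
    (A : VCategory.{u, v} V) :
    (∀ φ : A.Obj → V, (1 : V) ≤ PHom A φ φ) ∧
    (∀ φ ψ χ : A.Obj → V, PHom A φ ψ * PHom A ψ χ ≤ PHom A φ χ) := by
  constructor
  · intro φ
    rw [← one_mul (1 : V)]
    refine q_mono hV ?_ ?_ <;>
    · refine le_iInf fun a => le_sSup ?_
      exact le_iSup_of_le a (q_mono hV le_rfl (A.one_le_hom a))
  · intro φ ψ χ
    have h1 := q_half hV A.hom (fun a b c => by rw [mul_comm]; exact A.comp_le a b c) φ ψ χ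
    have h2 := q_half hV (fun a b => A.hom b a) (fun a b c => A.comp_le c b a) χ ψ φ
    unfold PHom
    rw [mul_mul_mul_comm]
    refine q_mono hV h1 ?_
    rw [mul_comm]
    exact h2
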